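/- Suppose the Assumptions hold and d₁ ≠ d₂. Then: (i) X contains points z with x(z) = x(a) and y(z) < y(a); let r be such a point with y(r) maximal; (ii) X contains points z with y(z) = y(a) and x(z) > x(a); let s be such a point with x(s) minimal; (iii) (r,s) is a blue arrow; (iv) there exists r' ∈ X with r' ≠ r such that {r,r'} is a decreasing pair and (r',s) is a blue arrow. -/

import Mathlib

noncomputable section
open Classical

/-- The L1 (Manhattan) metric on ℝ². -/
def rho (u v : ℝ × ℝ) : ℝ := |u.1 - v.1| + |u.2 - v.2|

/-- `z` is between `u` and `v` (w.r.t. the L1 metric): the three points are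
pairwise distinct and `ρ(u,v) = ρ(u,z) + ρ(z,v)`. -/
def MBtw (u z v : ℝ × ℝ) : Prop :=
  u ≠ z ∧ z ≠ v ∧ u ≠ v ∧ rho u v = rho u z + rho z v

/-- The line of `X` induced by distinct points `u, v`. -/
def lineThrough (X : Finset (ℝ × ℝ)) (u v : ℝ × ℝ) : Finset (ℝ × ℝ) :=
  X.filter fun z => z = u ∨ z = v ∨ MBtw u z v ∨ MBtw z u v ∨ MBtw u v z

/-- `X` is non-collinear: no line induced by two distinct points of `X` equals `X`. -/
def NonCollinear (X : Finset (ℝ × ℝ)) : Prop :=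
  ∀ u ∈ X, ∀ v ∈ X, u ≠ v → lineThrough X u v ≠ X

/-- `{p,q}` is an increasing pair. -/
def IncPair (p q : ℝ × ℝ) : Prop := 0 < (q.1 - p.1) * (q.2 - p.2)

/-- `{p,q}` is a decreasing pair. -/
def DecPair (p q : ℝ × ℝ) : Prop := (q.1 - p.1) * (q.2 - p.2) < 0

/-- The partial order `≤_I`. -/
def leI (c d : ℝ × ℝ) : Prop := c.1 ≤ d.1 ∧ c.2 ≤ d.2

/-- `c <_I d`. -/
def ltI (c d : ℝ × ℝ) : Prop := leI c d ∧ c ≠ d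

/-- The partial order `≤_D`. -/
def leD (c d : ℝ × ℝ) : Prop := c.1 ≤ d.1 ∧ d.2 ≤ c.2

/-- `c <_D d`. -/
def ltD (c d : ℝ × ℝ) : Prop := leD c d ∧ c ≠ d

/-- `(p,q)` is a blue arrow of `X`. -/
def BlueArrow (X : Finset (ℝ × ℝ)) (p q : ℝ × ℝ) : Prop :=
  p ∈ X ∧ q ∈ X ∧ IncPair p q ∧ ltI p q ∧
  ∀ a b, a ∈ X → b ∈ X → IncPair a b → ltI a b →
    lineThrough X a b = lineThrough X p q → (ltI q b ∨ (q = b ∧ leI a p))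

/-- `(p,q)` is a red arrow of `X`. -/
def RedArrow (X : Finset (ℝ × ℝ)) (p q : ℝ × ℝ) : Prop :=
  p ∈ X ∧ q ∈ X ∧ DecPair p q ∧ ltD p q ∧
  ∀ a b, a ∈ X → b ∈ X → DecPair a b → ltD a b →
    lineThrough X a b = lineThrough X p q → (ltD q b ∨ (q = b ∧ leD a p))

/-- An arrow is a blue or a red arrow. -/
def Arrow (X : Finset (ℝ × ℝ)) (p q : ℝ × ℝ) : Prop :=
  BlueArrow X p q ∨ RedArrow X p q

/-- `a` is not an endpoint of any arrow of `X`. -/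
def NotEndpoint (X : Finset (ℝ × ℝ)) (a : ℝ × ℝ) : Prop :=
  ∀ p q, Arrow X p q → a ≠ p ∧ a ≠ q

/-!
The line of an increasing pair consists of the points of `X` in decreasing position to neither of
its ends, and dually for decreasing pairs, so an equality of two lines compares positions of points.

If `d₁ ≠ d₂`, then `d₂` lies strictly to the lower left of `d₁`. The red arrow of `⟨a, d₁⟩` avoids
`a`, and comparing positions forces one of its ends onto the ray going right from `a`. Reflecting in
the antidiagonal exchanges `d₁` and `d₂`, so there is also a point on the ray going down. As `a` is
not an endpoint of a blue arrow, moreover `d₂.1 < s.1 < d₁.1` and `d₂.2 < r.2 < d₁.2`.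

A pair generating `⟨r, s⟩` must separate off `d₁`, so its upper end dominates `s` or is `a`; the
latter would produce a blue arrow into `a`, hence `(r, s)` is the arrow of its line. The line
`⟨d₂, s⟩` misses `a`, `d₁` and `r`, so its arrow also ends at `s`, and starts in decreasing position
to `r`.
-/

theorem incPair_iff {p q : ℝ × ℝ} :
    IncPair p q ↔ (p.1 < q.1 ∧ p.2 < q.2) ∨ (q.1 < p.1 ∧ q.2 < p.2) := by
  simp only [IncPair, mul_pos_iff, sub_pos, sub_neg]

theorem decPair_iff {p q : ℝ × ℝ} :
    DecPair p q ↔ (p.1 < q.1 ∧ q.2 < p.2) ∨ (q.1 < p.1 ∧ p.2 < q.2) := by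
  simp only [DecPair, mul_neg_iff, sub_pos, sub_neg]

theorem incPair_and_ltI_iff {p q : ℝ × ℝ} :
    IncPair p q ∧ ltI p q ↔ p.1 < q.1 ∧ p.2 < q.2 := by
  grind [incPair_iff, ltI, leI]

theorem decPair_and_ltD_iff {p q : ℝ × ℝ} :
    DecPair p q ∧ ltD p q ↔ p.1 < q.1 ∧ q.2 < p.2 := by
  grind [decPair_iff, ltD, leD]

theorem rho_eq_rho_add_rho_iff {u z v : ℝ × ℝ} :
    rho u v = rho u z + rho z v ↔ z.1 ∈ Set.uIcc u.1 v.1 ∧ z.2 ∈ Set.uIcc u.2 v.2 := by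
  have abs_iff (a b c : ℝ) : |a - c| = |a - b| + |b - c| ↔ b ∈ Set.uIcc a c := by
    rw [← sub_add_sub_cancel a b c, abs_add_eq_add_abs_iff, Set.mem_uIcc]
    grind
  rw [← abs_iff, ← abs_iff]
  have := abs_sub_le u.1 z.1 v.1
  have := abs_sub_le u.2 z.2 v.2
  grind [rho]

theorem mem_lineThrough {X : Finset (ℝ × ℝ)} {u v z : ℝ × ℝ} (huv : u ≠ v) :
    z ∈ lineThrough X u v ↔ z ∈ X ∧
      (rho u v = rho u z + rho z v ∨ rho z v = rho z u + rho u v ∨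
        rho u z = rho u v + rho v z) := by
  rw [lineThrough, Finset.mem_filter]
  refine and_congr_right fun _ => ?_
  grind [MBtw, rho]

theorem mem_lineThrough_of_incPair {X : Finset (ℝ × ℝ)} {u v z : ℝ × ℝ} (huv : IncPair u v) :
    z ∈ lineThrough X u v ↔ z ∈ X ∧ ¬DecPair u z ∧ ¬DecPair v z := by
  rw [mem_lineThrough (by grind [incPair_iff])]
  simp only [rho_eq_rho_add_rho_iff, Set.mem_uIcc]
  grind [incPair_iff, decPair_iff]

theorem mem_lineThrough_of_decPair {X : Finset (ℝ × ℝ)} {u v z : ℝ × ℝ} (huv : DecPair u v) :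
    z ∈ lineThrough X u v ↔ z ∈ X ∧ ¬IncPair u z ∧ ¬IncPair v z := by
  rw [mem_lineThrough (by grind [decPair_iff])]
  simp only [rho_eq_rho_add_rho_iff, Set.mem_uIcc]
  grind [incPair_iff, decPair_iff]

theorem incPair_or_iff_of_lineThrough_eq {X : Finset (ℝ × ℝ)} {t w p q z : ℝ × ℝ}
    (htw : DecPair t w) (hpq : DecPair p q) (hl : lineThrough X t w = lineThrough X p q)
    (hz : z ∈ X) : IncPair t z ∨ IncPair w z ↔ IncPair p z ∨ IncPair q z := by
  have := Finset.ext_iff.1 hl z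
  rw [mem_lineThrough_of_decPair htw, mem_lineThrough_of_decPair hpq] at this
  tauto

theorem NonCollinear.exists_between_of_fst_eq {X : Finset (ℝ × ℝ)} (hnc : NonCollinear X)
    {p q : ℝ × ℝ} (hp : p ∈ X) (hq : q ∈ X) (hfst : p.1 = q.1) (hsnd : p.2 < q.2) :
    ∃ z ∈ X, p.2 < z.2 ∧ z.2 < q.2 ∧ z.1 ≠ p.1 := by
  have hpq : p ≠ q := by grind
  by_contra! hempty
  refine hnc p hp q hq hpq (Finset.ext fun z => ?_)
  rw [mem_lineThrough hpq, and_iff_left_iff_imp]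
  simp only [rho_eq_rho_add_rho_iff, Set.mem_uIcc]
  grind

theorem NonCollinear.exists_nearest_above {X : Finset (ℝ × ℝ)} {a t : ℝ × ℝ}
    (hnc : NonCollinear X) (haX : a ∈ X) (htX : t ∈ X) (ht : t.1 = a.1) (hat : a.2 < t.2) :
    ∃ t' ∈ X, t'.1 = a.1 ∧ a.2 < t'.2 ∧ (∀ z ∈ X, z.1 = a.1 → a.2 < z.2 → t'.2 ≤ z.2) ∧
      ∃ p ∈ X, a.2 < p.2 ∧ p.2 < t'.2 ∧ p.1 ≠ a.1 := by
  obtain ⟨t', ht', hmin⟩ := (X.filter fun z => z.1 = a.1 ∧ a.2 < z.2).exists_min_image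
    Prod.snd ⟨t, Finset.mem_filter.2 ⟨htX, ht, hat⟩⟩
  obtain ⟨ht'X, ht', hat'⟩ := Finset.mem_filter.1 ht'
  exact ⟨t', ht'X, ht', hat',
    fun z hz hza hza' => hmin z (Finset.mem_filter.2 ⟨hz, hza, hza'⟩),
    hnc.exists_between_of_fst_eq haX ht'X ht'.symm hat'⟩

/-! ### Reflection in the antidiagonal -/

theorem lineThrough_map {e : ℝ × ℝ ≃ ℝ × ℝ} (he : ∀ u v, rho (e u) (e v) = rho u v)
    (X : Finset (ℝ × ℝ)) (u v : ℝ × ℝ) :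
    lineThrough (X.map e.toEmbedding) (e u) (e v) = (lineThrough X u v).map e.toEmbedding := by
  ext z
  obtain ⟨z, rfl⟩ := e.surjective z
  rw [lineThrough, lineThrough, ← e.coe_toEmbedding, Finset.mem_map', Finset.mem_filter,
    Finset.mem_filter]
  simp [MBtw, he]

theorem NonCollinear.map {X : Finset (ℝ × ℝ)} (hnc : NonCollinear X) {e : ℝ × ℝ ≃ ℝ × ℝ}
    (he : ∀ u v, rho (e u) (e v) = rho u v) : NonCollinear (X.map e.toEmbedding) := by
  simp only [NonCollinear, Finset.forall_mem_map, Equiv.coe_toEmbedding, lineThrough_map he,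
    (Finset.map_injective _).ne_iff, e.injective.ne_iff]
  exact hnc

/-- Reflection of the plane in the antidiagonal `x + y = 0`. Centred at `a`, it keeps the second and
fourth quadrants and exchanges the roles of `d₁` and `d₂`. -/
def antiReflect : ℝ × ℝ ≃ ℝ × ℝ where
  toFun p := (-p.2, -p.1)
  invFun p := (-p.2, -p.1)
  left_inv p := by simp
  right_inv p := by simp

@[simp] theorem antiReflect_fst (p : ℝ × ℝ) : (antiReflect p).1 = -p.2 := rfl

@[simp] theorem antiReflect_snd (p : ℝ × ℝ) : (antiReflect p).2 = -p.1 := rfl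

theorem rho_antiReflect (u v : ℝ × ℝ) : rho (antiReflect u) (antiReflect v) = rho u v := by
  simp only [rho, antiReflect_fst, antiReflect_snd, neg_sub_neg]
  rw [abs_sub_comm v.2, abs_sub_comm v.1, add_comm]

@[simp] theorem incPair_antiReflect {p q : ℝ × ℝ} :
    IncPair (antiReflect p) (antiReflect q) ↔ IncPair p q := by
  grind [incPair_iff, antiReflect_fst, antiReflect_snd]

@[simp] theorem decPair_antiReflect {p q : ℝ × ℝ} :
    DecPair (antiReflect p) (antiReflect q) ↔ DecPair p q := by
  grind [decPair_iff, antiReflect_fst, antiReflect_snd]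

@[simp] theorem leD_antiReflect {p q : ℝ × ℝ} :
    leD (antiReflect p) (antiReflect q) ↔ leD p q := by
  grind [leD, antiReflect_fst, antiReflect_snd]

@[simp] theorem ltD_antiReflect {p q : ℝ × ℝ} :
    ltD (antiReflect p) (antiReflect q) ↔ ltD p q := by
  simp [ltD]

theorem RedArrow.map_antiReflect {X : Finset (ℝ × ℝ)} {p q : ℝ × ℝ} (h : RedArrow X p q) :
    RedArrow (X.map antiReflect.toEmbedding) (antiReflect p) (antiReflect q) := by
  obtain ⟨hp, hq, hpq, hlt, hmax⟩ := h
  refine ⟨by simpa, by simpa, by simpa, by simpa, fun u v hu hv => ?_⟩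
  obtain ⟨u, rfl⟩ := antiReflect.surjective u
  obtain ⟨v, rfl⟩ := antiReflect.surjective v
  simpa [lineThrough_map rho_antiReflect] using hmax u v (by simpa using hu) (by simpa using hv)

theorem NonCollinear.exists_between_of_snd_eq {X : Finset (ℝ × ℝ)} (hnc : NonCollinear X)
    {p q : ℝ × ℝ} (hp : p ∈ X) (hq : q ∈ X) (hsnd : p.2 = q.2) (hfst : p.1 < q.1) :
    ∃ z ∈ X, p.1 < z.1 ∧ z.1 < q.1 ∧ z.2 ≠ p.2 := by
  obtain ⟨z, hz, hqz, hzp, hne⟩ := (hnc.map rho_antiReflect).exists_between_of_fst_eq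
    (p := antiReflect q) (q := antiReflect p) (by simpa) (by simpa) (by simp [hsnd]) (by simpa)
  obtain ⟨z, hzX, rfl⟩ := Finset.mem_map.1 hz
  simp only [Equiv.coe_toEmbedding, antiReflect_fst, antiReflect_snd, neg_lt_neg_iff, ne_eq,
    neg_inj] at hqz hzp hne
  exact ⟨z, hzX, hzp, hqz, hsnd ▸ hne⟩

/-! ### Arrows of a line -/

/-- `u` and `v` are points of `X`, with `v` strictly to the upper right of `u`, that induce the
line `L`. Arrows are extremal such pairs. -/
structure IncGenerates (X L : Finset (ℝ × ℝ)) (u v : ℝ × ℝ) : Prop where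
  left_mem : u ∈ X
  right_mem : v ∈ X
  fst_lt : u.1 < v.1
  snd_lt : u.2 < v.2
  line_eq : lineThrough X u v = L

namespace IncGenerates

variable {X L : Finset (ℝ × ℝ)} {p q u v z : ℝ × ℝ}

theorem mem_iff (h : IncGenerates X L u v) : z ∈ L ↔ z ∈ X ∧ ¬DecPair u z ∧ ¬DecPair v z := by
  rw [← h.line_eq, mem_lineThrough_of_incPair (incPair_iff.2 (.inl ⟨h.fst_lt, h.snd_lt⟩))]

theorem left_mem_line (h : IncGenerates X L u v) : u ∈ L := by
  grind [h.mem_iff, h.left_mem, h.fst_lt, h.snd_lt, decPair_iff]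

theorem right_mem_line (h : IncGenerates X L u v) : v ∈ L := by
  grind [h.mem_iff, h.right_mem, h.fst_lt, h.snd_lt, decPair_iff]

theorem decPair_or_of_notMem (h : IncGenerates X L u v) (hz : z ∈ X) (hzL : z ∉ L) :
    DecPair u z ∨ DecPair v z := by
  rw [h.mem_iff] at hzL
  tauto

theorem blueArrow (h : IncGenerates X L p q)
    (hmin : ∀ u v, IncGenerates X L u v → leI q v ∧ (v = q → leI u p)) : BlueArrow X p q := by
  obtain ⟨hpq, hlt⟩ := incPair_and_ltI_iff.2 ⟨h.fst_lt, h.snd_lt⟩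
  refine ⟨h.left_mem, h.right_mem, hpq, hlt, fun u v hu hv huv hlt' hl => ?_⟩
  obtain ⟨hfst, hsnd⟩ := incPair_and_ltI_iff.1 ⟨huv, hlt'⟩
  obtain ⟨hqv, hup⟩ := hmin u v ⟨hu, hv, hfst, hsnd, hl.trans h.line_eq⟩
  by_cases hvq : v = q
  · exact .inr ⟨hvq.symm, hup hvq⟩
  · exact .inl ⟨hqv, Ne.symm hvq⟩

theorem exists_blueArrow_left (h : IncGenerates X L p q)
    (hleft : ∀ u v, IncGenerates X L u v → u = p) : ∃ v, BlueArrow X p v := by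
  obtain ⟨v, hv, hmin⟩ := (X.filter (IncGenerates X L p)).exists_min_image (fun v => v.1 + v.2)
    ⟨q, Finset.mem_filter.2 ⟨h.right_mem, h⟩⟩
  have hpv := (Finset.mem_filter.1 hv).2
  refine ⟨v, hpv.blueArrow fun u w huw => ?_⟩
  obtain rfl := hleft u w huw
  have hle := hmin w (Finset.mem_filter.2 ⟨huw.right_mem, huw⟩)
  have hcomp := (hpv.mem_iff.1 huw.right_mem_line).2.2
  grind [leI, decPair_iff]

theorem exists_blueArrow_right (h : IncGenerates X L p q)
    (hright : ∀ u v, IncGenerates X L u v → leI q v) :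
    ∃ u, IncGenerates X L u q ∧ BlueArrow X u q := by
  obtain ⟨u, hu, hmax⟩ := (X.filter (IncGenerates X L · q)).exists_max_image (fun u => u.1 + u.2)
    ⟨p, Finset.mem_filter.2 ⟨h.left_mem, h⟩⟩
  have huq := (Finset.mem_filter.1 hu).2
  refine ⟨u, huq, huq.blueArrow fun u' v hgen => ⟨hright u' v hgen, ?_⟩⟩
  rintro rfl
  have hle := hmax u' (Finset.mem_filter.2 ⟨hgen.left_mem, hgen⟩)
  have hcomp := (huq.mem_iff.1 hgen.left_mem_line).2.1
  grind [leI, decPair_iff]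

end IncGenerates

/-! ### The lines `⟨r, s⟩` and `⟨d₂, s⟩` -/

/-- `r` is the highest point of `X` on the open ray going down from `a`. -/
structure NearestBelow (X : Finset (ℝ × ℝ)) (a r : ℝ × ℝ) : Prop where
  mem : r ∈ X
  fst_eq : r.1 = a.1
  snd_lt : r.2 < a.2
  le_snd : ∀ z ∈ X, z.1 = a.1 → z.2 < a.2 → z.2 ≤ r.2

/-- `s` is the leftmost point of `X` on the open ray going right from `a`. -/
structure NearestRight (X : Finset (ℝ × ℝ)) (a s : ℝ × ℝ) : Prop where
  mem : s ∈ X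
  snd_eq : s.2 = a.2
  fst_lt : a.1 < s.1
  fst_le : ∀ z ∈ X, z.2 = a.2 → a.1 < z.1 → s.1 ≤ z.1

section Nearest

variable {X : Finset (ℝ × ℝ)} {a c d r s : ℝ × ℝ}

theorem incGenerates_nearest (hr : NearestBelow X a r) (hs : NearestRight X a s) :
    IncGenerates X (lineThrough X r s) r s :=
  ⟨hr.mem, hs.mem, hr.fst_eq ▸ hs.fst_lt, hs.snd_eq ▸ hr.snd_lt, rfl⟩

theorem eq_or_leI_of_incGenerates_nearest (haX : a ∈ X) (hr : NearestBelow X a r)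
    (hs : NearestRight X a s) (hdX : d ∈ X) (hrd : r.2 < d.2) (hda : d.2 < a.2) (hsd : s.1 < d.1)
    {u v : ℝ × ℝ} (h : IncGenerates X (lineThrough X r s) u v) :
    v = a ∨ (leI s v ∧ (v = s → leI u r)) := by
  have hra := hr.fst_eq
  have hsa := hs.snd_eq
  have hrs : IncGenerates X (lineThrough X r s) r s := incGenerates_nearest hr hs
  have ha : a ∈ lineThrough X r s :=
    hrs.mem_iff.2 ⟨haX, by grind [decPair_iff], by grind [decPair_iff]⟩
  have hd : d ∉ lineThrough X r s := by grind [hrs.mem_iff, decPair_iff]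
  have hd_dec : DecPair u d ∨ DecPair v d := h.decPair_or_of_notMem hdX hd
  obtain ⟨-, hua, hva⟩ := h.mem_iff.1 ha
  obtain ⟨huX, hru, hsu⟩ := hrs.mem_iff.1 h.left_mem_line
  obtain ⟨hvX, hrv, hsv⟩ := hrs.mem_iff.1 h.right_mem_line
  have huv := h.snd_lt
  by_cases hle : leI v a
  · have hdv : d.2 < v.2 := by grind [decPair_iff]
    have hfst : v.1 = a.1 := by grind [leI, decPair_iff]
    have hsnd : v.2 = a.2 :=
      hle.2.eq_of_not_lt fun hlt => by linarith [hr.le_snd v hvX hfst hlt]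
    exact .inl (Prod.ext hfst hsnd)
  · have hsle : leI s v := by grind [leI, decPair_iff, hs.fst_le v hvX]
    refine .inr ⟨hsle, ?_⟩
    rintro rfl
    grind [leI, decPair_iff, hr.le_snd u huX]

theorem blueArrow_of_nearest (haX : a ∈ X) (hiso : NotEndpoint X a) (hr : NearestBelow X a r)
    (hs : NearestRight X a s) (hdX : d ∈ X) (hrd : r.2 < d.2) (hda : d.2 < a.2)
    (hsd : s.1 < d.1) : BlueArrow X r s := by
  have hgen {u v} (h : IncGenerates X (lineThrough X r s) u v) :
      v = a ∨ (leI s v ∧ (v = s → leI u r)) :=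
    eq_or_leI_of_incGenerates_nearest haX hr hs hdX hrd hda hsd h
  refine (incGenerates_nearest hr hs).blueArrow fun u v huv => (hgen huv).resolve_left ?_
  rintro rfl
  obtain ⟨q, -, hq⟩ := huv.exists_blueArrow_right fun u' v' h => by
    grind [leI, hgen h, hs.fst_lt, hs.snd_eq]
  exact (hiso q v (.inl hq)).2 rfl

theorem exists_blueArrow_nearestRight (haX : a ∈ X) (hr : NearestBelow X a r)
    (hs : NearestRight X a s) (hdX : d ∈ X) (hda : d.2 < a.2) (hsd : s.1 < d.1)
    (hstrip : ∀ z ∈ X, ¬(a.1 < z.1 ∧ d.2 < z.2 ∧ z.2 < a.2))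
    (hcX : c ∈ X) (hac : a.1 < c.1) (hcr : c.2 < r.2) (hcs : c.1 < s.1) :
    ∃ q ∈ X, q ≠ r ∧ DecPair r q ∧ BlueArrow X q s := by
  have hra := hr.fst_eq
  have hra' := hr.snd_lt
  have hsa := hs.snd_eq
  have hgen : IncGenerates X (lineThrough X c s) c s := ⟨hcX, hs.mem, hcs, by grind, rfl⟩
  have ha : a ∉ lineThrough X c s := by grind [hgen.mem_iff, decPair_iff]
  have hd : d ∉ lineThrough X c s := by grind [hgen.mem_iff, decPair_iff]
  have hrL : r ∉ lineThrough X c s := by grind [hgen.mem_iff, decPair_iff]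
  obtain ⟨q, hqs, hq⟩ := hgen.exists_blueArrow_right fun u v h => by
    have ha_dec : DecPair u a ∨ DecPair v a := h.decPair_or_of_notMem haX ha
    have hd_dec : DecPair u d ∨ DecPair v d := h.decPair_or_of_notMem hdX hd
    have hfst := h.fst_lt
    have hsnd := h.snd_lt
    obtain ⟨-, -, hsv⟩ := hgen.mem_iff.1 h.right_mem_line
    by_contra hle
    have hvs : leI v s := by grind [leI, decPair_iff]
    have hav : a.1 < v.1 := by grind [decPair_iff]
    have hdv : d.2 < v.2 := by grind [decPair_iff]
    have hva : v.2 = a.2 := by grind [leI, hstrip v h.right_mem]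
    exact hle ⟨hs.fst_le v h.right_mem hva hav, (hsa.trans hva.symm).le⟩
  have hqr : DecPair r q := by grind [hqs.decPair_or_of_notMem hr.mem hrL, decPair_iff]
  exact ⟨q, hqs.left_mem, by grind [decPair_iff], hqr, hq⟩

end Nearest

/-! ### Blue arrows at `a` -/

section Endpoint

variable {X : Finset (ℝ × ℝ)} {a d r t : ℝ × ℝ}

theorem exists_blueArrow_to (hnc : NonCollinear X) (haX : a ∈ X)
    (hQ2 : ∀ z ∈ X, ¬(z.1 < a.1 ∧ a.2 < z.2))
    (hdX : d ∈ X) (had : a.1 < d.1) (hda : d.2 < a.2)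
    (htX : t ∈ X) (hta : t.1 < a.1) (ht : t.2 = a.2)
    (hbelow : ∀ z ∈ X, t.1 < z.1 → z.1 ≤ a.1 → z.2 < a.2 → z.2 < d.2) :
    ∃ u, BlueArrow X u a := by
  -- Let `t'` be nearest to `a`: a pair generating `⟨p, a⟩` whose upper end does not dominate `a`
  -- would have this end on the left ray, strictly between `t'` and `a`.
  obtain ⟨t', ht', hmax⟩ := (X.filter fun z => t.1 ≤ z.1 ∧ z.1 < a.1 ∧ z.2 = a.2).exists_max_image
    Prod.fst ⟨t, by grind⟩
  obtain ⟨ht'X, htt', ht'a, ht'⟩ := Finset.mem_filter.1 ht'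
  obtain ⟨p, hpX, ht'p, hpa, hp⟩ := hnc.exists_between_of_snd_eq ht'X haX ht' ht'a
  have hpd : p.2 < d.2 := hbelow p hpX (by grind) hpa.le (by grind)
  have hgen : IncGenerates X (lineThrough X p a) p a := ⟨hpX, haX, hpa, by grind, rfl⟩
  have hd : d ∉ lineThrough X p a := by grind [hgen.mem_iff, decPair_iff]
  obtain ⟨u, -, hu⟩ := hgen.exists_blueArrow_right fun u v h => by
    obtain ⟨hvX, hpv, hav⟩ := hgen.mem_iff.1 h.right_mem_line
    have hd_dec : DecPair u d ∨ DecPair v d := h.decPair_or_of_notMem hdX hd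
    have hfst := h.fst_lt
    have hsnd := h.snd_lt
    by_contra hle
    have hva : leI v a := by grind [leI, decPair_iff]
    have hdv : d.2 < v.2 := by grind [decPair_iff]
    have hpv' : p.1 ≤ v.1 := by grind [decPair_iff]
    have hv : v.2 = a.2 := by grind [leI]
    have hv' : v.1 < a.1 := by grind [leI]
    have hvt' : v.1 ≤ t'.1 := hmax v (by grind)
    linarith
  exact ⟨u, hu⟩

theorem exists_blueArrow_from (hnc : NonCollinear X) (haX : a ∈ X)
    (hQ2 : ∀ z ∈ X, ¬(z.1 < a.1 ∧ a.2 < z.2))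
    (hdX : d ∈ X) (had : a.1 < d.1) (hda : d.2 < a.2)
    (hrX : r ∈ X) (hra : r.1 = a.1) (hrd : r.2 < d.2)
    (hbelow : ∀ z ∈ X, z.1 = a.1 → z.2 < a.2 → z.2 < d.2)
    (htX : t ∈ X) (hat : a.2 < t.2) (ht : t.1 = a.1)
    (hright : ∀ z ∈ X, a.1 < z.1 → a.2 ≤ z.2 → z.2 < t.2 → d.1 ≤ z.1) :
    ∃ v, BlueArrow X a v := by
  obtain ⟨t', ht'X, ht', hat', hmin, p, hpX, hap, hpt', hp⟩ :=
    hnc.exists_nearest_above haX htX ht hat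
  have ht't : t'.2 ≤ t.2 := hmin t htX ht hat
  have hap' : a.1 < p.1 := by grind
  have hgen : IncGenerates X (lineThrough X a p) a p := ⟨haX, hpX, hap', hap, rfl⟩
  have hd : d ∉ lineThrough X a p := by grind [hgen.mem_iff, decPair_iff]
  have ht'L : t' ∉ lineThrough X a p := by grind [hgen.mem_iff, decPair_iff]
  have hrL : r ∈ lineThrough X a p := by grind [hgen.mem_iff, decPair_iff]
  -- A generating pair separates off both `d` and `t'`; this pins its lower end to `a`.
  refine hgen.exists_blueArrow_left fun u v h => ?_
  obtain ⟨-, hau, -⟩ := hgen.mem_iff.1 h.left_mem_line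
  obtain ⟨hvX, hav, -⟩ := hgen.mem_iff.1 h.right_mem_line
  obtain ⟨-, hur, -⟩ := h.mem_iff.1 hrL
  have hd_dec : DecPair u d ∨ DecPair v d := h.decPair_or_of_notMem hdX hd
  have ht'_dec : DecPair u t' ∨ DecPair v t' := h.decPair_or_of_notMem ht'X ht'L
  have hua : leI u a := by
    by_contra hua
    have hle : leI a u := by grind [leI, decPair_iff]
    have hut' : u.2 < t'.2 := by grind [leI, decPair_iff, h.fst_lt, h.snd_lt]
    rcases hle.1.eq_or_lt with hfst | hfst
    · have hsnd : a.2 < u.2 := hle.2.lt_of_ne fun hsnd => hua ⟨hfst.ge, hsnd.ge⟩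
      linarith [hmin u h.left_mem hfst.symm hsnd]
    · have hdu : d.1 ≤ u.1 := hright u h.left_mem hfst hle.2 (by linarith)
      grind [leI, decPair_iff, h.fst_lt, h.snd_lt]
  by_contra hne
  obtain ⟨hvt', hav'⟩ : v.2 < t'.2 ∧ a.1 < v.1 := by grind [leI, decPair_iff]
  have hav'' : a.2 ≤ v.2 := by grind [decPair_iff]
  have hdv : d.1 ≤ v.1 := hright v hvX hav' hav'' (by linarith)
  have hdu : d.2 < u.2 := by grind [decPair_iff]
  have hfst : u.1 = a.1 := by grind [leI, decPair_iff]
  have hsnd : u.2 < a.2 := lt_of_le_of_ne hua.2 fun hsnd => hne (Prod.ext hfst hsnd)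
  linarith [hbelow u h.left_mem hfst hsnd]

end Endpoint

/-! ### Red arrows of `⟨a, d₁⟩` and `⟨a, d₂⟩` -/

/-- The Assumptions as seen from the point `d = d₁` and the red arrow `(t, w) = (t₁, w₁)`, the
existence of `d₂` being replaced by `exists_lt`. After `antiReflect`, the point `d₂` and the red
arrow `(t₂, w₂)` satisfy them too. -/
structure RedSide (X : Finset (ℝ × ℝ)) (a d t w : ℝ × ℝ) : Prop where
  nonCollinear : NonCollinear X
  mem : a ∈ X
  quadrant₂ : ∀ z ∈ X, ¬(z.1 < a.1 ∧ a.2 < z.2)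
  d_mem : d ∈ X
  fst_lt : a.1 < d.1
  snd_lt : d.2 < a.2
  strip : ∀ z ∈ X, ¬(a.1 < z.1 ∧ d.2 < z.2 ∧ z.2 < a.2)
  segment : ∀ z ∈ X, ¬(a.1 < z.1 ∧ z.1 < d.1 ∧ z.2 = d.2)
  exists_lt : ∃ c ∈ X, a.1 < c.1 ∧ c.1 < d.1 ∧ c.2 < d.2
  arrow : RedArrow X t w
  line_eq : lineThrough X t w = lineThrough X a d
  ne_left : a ≠ t
  ne_right : a ≠ w

namespace RedSide

variable {X : Finset (ℝ × ℝ)} {a d r s t w z : ℝ × ℝ}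

theorem incPair_or_iff (h : RedSide X a d t w) (hz : z ∈ X) :
    IncPair t z ∨ IncPair w z ↔ IncPair a z ∨ IncPair d z :=
  incPair_or_iff_of_lineThrough_eq h.arrow.2.2.1 (decPair_iff.2 (.inl ⟨h.fst_lt, h.snd_lt⟩))
    h.line_eq hz

theorem ltD_or_eq (h : RedSide X a d t w) : ltD w d ∨ w = d ∧ leD a t := by
  obtain ⟨had, hlt⟩ := decPair_and_ltD_iff.2 ⟨h.fst_lt, h.snd_lt⟩
  exact h.arrow.2.2.2.2 a d h.mem h.d_mem had hlt h.line_eq.symm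

theorem left_on_right_ray_of_eq (h : RedSide X a d t w) (hwd : w = d) : t.2 = a.2 ∧ a.1 < t.1 := by
  obtain ⟨htX, -, htw, hlt, -⟩ := h.arrow
  have htw' := decPair_and_ltD_iff.1 ⟨htw, hlt⟩
  have hat : leD a t := by grind [ltD, h.ltD_or_eq]
  have ht : a.1 < t.1 := by
    by_contra hta
    have hfst : t.1 = a.1 := le_antisymm (not_lt.1 hta) hat.1
    obtain ⟨z, hzX, htz, hza, hz⟩ := h.nonCollinear.exists_between_of_fst_eq htX h.mem hfst
      (lt_of_le_of_ne hat.2 fun hsnd => h.ne_left (Prod.ext hfst.symm hsnd.symm))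
    grind [h.strip z hzX, h.incPair_or_iff hzX, incPair_iff]
  grind [leD, h.strip t htX]

theorem on_rays_of_ne (h : RedSide X a d t w) (hwd : w ≠ d) :
    w.2 = a.2 ∧ a.1 < w.1 ∧ w.1 ≤ d.1 ∧ t.1 = a.1 ∧ a.2 < t.2 := by
  obtain ⟨htX, hwX, htw, hlt, -⟩ := h.arrow
  obtain ⟨c, hcX, hac, hcd, hcd'⟩ := h.exists_lt
  have htw' := decPair_and_ltD_iff.1 ⟨htw, hlt⟩
  have hwd' : leD w d := by grind [ltD, h.ltD_or_eq]
  have ht_inc := h.incPair_or_iff htX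
  have hw_inc := h.incPair_or_iff hwX
  have htQ2 := h.quadrant₂ t htX
  have haw : a.1 < w.1 := by
    by_contra hwa
    rcases (not_lt.1 hwa).lt_or_eq with hfst | hfst
    · grind [incPair_iff]
    · have hsnd : w.2 < a.2 := by grind [h.ne_right]
      have hc_inc : IncPair t c ∨ IncPair w c :=
        (h.incPair_or_iff hcX).2 (.inr (incPair_iff.2 (.inr ⟨hcd, hcd'⟩)))
      grind [incPair_iff]
  have hwa : w.2 = a.2 := by
    have hw_strip := h.strip w hwX
    have hw_segment := h.segment w hwX
    grind [leD, incPair_iff]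
  grind [leD, incPair_iff]

theorem exists_right (h : RedSide X a d t w) :
    ∃ e ∈ X, e.2 = a.2 ∧ a.1 < e.1 := by
  by_cases hwd : w = d
  · exact ⟨t, h.arrow.1, h.left_on_right_ray_of_eq hwd⟩
  · obtain ⟨hsnd, hfst, -⟩ := h.on_rays_of_ne hwd
    exact ⟨w, h.arrow.2.1, hsnd, hfst⟩

theorem snd_lt_of_below (h : RedSide X a d t w) (hz : z ∈ X) (hza : z.1 = a.1)
    (hza' : z.2 < a.2) : z.2 < d.2 := by
  have had := h.fst_lt
  have hz_inc := h.incPair_or_iff hz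
  by_cases hwd : w = d
  · grind [h.left_on_right_ray_of_eq hwd, incPair_iff]
  · grind [h.on_rays_of_ne hwd, incPair_iff]

theorem nearestRight_fst_lt (h : RedSide X a d t w) (hiso : NotEndpoint X a)
    (hs : NearestRight X a s) (hr : r ∈ X) (hra : r.1 = a.1) (hra' : r.2 < a.2) :
    s.1 < d.1 := by
  obtain ⟨htX, hwX, htw, hlt, -⟩ := h.arrow
  have htw' := decPair_and_ltD_iff.1 ⟨htw, hlt⟩
  by_cases hwd : w = d
  · obtain ⟨ht, hat⟩ := h.left_on_right_ray_of_eq hwd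
    exact (hs.fst_le t htX ht hat).trans_lt (hwd ▸ htw'.1)
  obtain ⟨hw, haw, hwd', hta, hat⟩ := h.on_rays_of_ne hwd
  refine lt_of_le_of_ne ((hs.fst_le w hwX hw haw).trans hwd') fun hsd => ?_
  obtain ⟨v, hv⟩ := exists_blueArrow_from h.nonCollinear h.mem h.quadrant₂ h.d_mem h.fst_lt h.snd_lt
    hr hra (h.snd_lt_of_below hr hra hra') (fun z hz => h.snd_lt_of_below hz) htX hat hta
    fun z hz haz haz' hzt => by
      rcases haz'.eq_or_lt with hsnd | hsnd
      · exact hsd ▸ hs.fst_le z hz hsnd.symm haz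
      · grind [h.incPair_or_iff hz, hs.fst_le w hwX hw haw, incPair_iff]
  exact (hiso a v (.inl hv)).1 rfl

end RedSide

section Reflect

variable {X : Finset (ℝ × ℝ)} {a c d d₁ d₂ r t t₁ t₂ w w₁ w₂ z : ℝ × ℝ}

theorem redSide_antiReflect (hnc : NonCollinear X) (haX : a ∈ X)
    (hQ2 : ∀ z ∈ X, ¬(z.1 < a.1 ∧ a.2 < z.2)) (hdX : d ∈ X) (had : a.1 < d.1) (hda : d.2 < a.2)
    (hstrip : ∀ z ∈ X, ¬(a.1 < z.1 ∧ z.1 < d.1 ∧ z.2 < a.2))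
    (hsegment : ∀ z ∈ X, ¬(z.1 = d.1 ∧ d.2 < z.2 ∧ z.2 < a.2))
    (hcX : c ∈ X) (hca : c.2 < a.2) (hdc : d.1 < c.1) (hdc' : d.2 < c.2)
    (harrow : RedArrow X t w) (hline : lineThrough X t w = lineThrough X a d)
    (hat : a ≠ t) (haw : a ≠ w) :
    RedSide (X.map antiReflect.toEmbedding) (antiReflect a) (antiReflect d) (antiReflect t)
      (antiReflect w) where
  nonCollinear := hnc.map rho_antiReflect
  mem := by simpa
  quadrant₂ := Finset.forall_mem_map.2 fun z hz => by
    simpa [and_comm] using hQ2 z hz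
  d_mem := by simpa
  fst_lt := by simpa
  snd_lt := by simpa
  strip := Finset.forall_mem_map.2 fun z hz => by
    simpa [and_comm, and_assoc] using hstrip z hz
  segment := Finset.forall_mem_map.2 fun z hz => by
    simpa [and_comm, and_assoc] using hsegment z hz
  exists_lt := ⟨antiReflect c, by simpa, by simpa, by simpa, by simpa⟩
  arrow := harrow.map_antiReflect
  line_eq := by rw [lineThrough_map rho_antiReflect, lineThrough_map rho_antiReflect, hline]
  ne_left := by simpa
  ne_right := by simpa

namespace RedSide

theorem lt_fst_of_right (h : RedSide (X.map antiReflect.toEmbedding) (antiReflect a)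
    (antiReflect d) (antiReflect t) (antiReflect w)) (hz : z ∈ X) (hza : z.2 = a.2)
    (hza' : a.1 < z.1) : d.1 < z.1 := by
  simpa using h.snd_lt_of_below (z := antiReflect z) (by simpa) (by simpa) (by simpa)

theorem exists_below (h : RedSide (X.map antiReflect.toEmbedding) (antiReflect a)
    (antiReflect d) (antiReflect t) (antiReflect w)) : ∃ z ∈ X, z.1 = a.1 ∧ z.2 < a.2 := by
  obtain ⟨e, he, hsnd, hfst⟩ := h.exists_right
  obtain ⟨z, hz, rfl⟩ := Finset.mem_map.1 he
  exact ⟨z, hz, by simpa using hsnd, by simpa using hfst⟩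

theorem lt_snd_nearestBelow (h₁ : RedSide X a d₁ t₁ w₁)
    (h₂ : RedSide (X.map antiReflect.toEmbedding) (antiReflect a) (antiReflect d₂)
      (antiReflect t₂) (antiReflect w₂))
    (hiso : NotEndpoint X a) (hr : NearestBelow X a r) : d₂.2 < r.2 := by
  have htX : t₂ ∈ X := by simpa using h₂.arrow.1
  have hwX : w₂ ∈ X := by simpa using h₂.arrow.2.1
  have htw : t₂.1 < w₂.1 ∧ w₂.2 < t₂.2 := by
    simpa [and_comm] using decPair_and_ltD_iff.1 ⟨h₂.arrow.2.2.1, h₂.arrow.2.2.2.1⟩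
  by_cases hwd : w₂ = d₂
  · have ht : t₂.1 = a.1 ∧ t₂.2 < a.2 := by
      simpa using h₂.left_on_right_ray_of_eq (congrArg antiReflect hwd)
    exact (hwd ▸ htw.2).trans_le (hr.le_snd t₂ htX ht.1 ht.2)
  obtain ⟨hwa, hwa', -, ht, hta⟩ :
      w₂.1 = a.1 ∧ w₂.2 < a.2 ∧ d₂.2 ≤ w₂.2 ∧ t₂.2 = a.2 ∧ t₂.1 < a.1 := by
    simpa using h₂.on_rays_of_ne (antiReflect.injective.ne hwd)
  have hwd₁ : w₂.2 < d₁.2 := h₁.snd_lt_of_below hwX hwa hwa'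
  obtain ⟨u, hu⟩ := exists_blueArrow_to h₁.nonCollinear h₁.mem h₁.quadrant₂ h₁.d_mem h₁.fst_lt
    h₁.snd_lt htX hta ht fun z hz htz hza hza' => by
      rcases hza.eq_or_lt with hfst | hfst
      · exact h₁.snd_lt_of_below hz hfst hza'
      · have hz_inc : IncPair t₂ z ∨ IncPair w₂ z ↔ IncPair a z ∨ IncPair d₂ z := by
          simpa using h₂.incPair_or_iff (z := antiReflect z) (by simpa)
        grind [incPair_iff]
  exact absurd rfl (hiso u a (.inl hu)).2

end RedSide

end Reflect

theorem lt_and_lt_of_strip_of_segment {X : Finset (ℝ × ℝ)} {a c d : ℝ × ℝ}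
    (hdX : d ∈ X) (hd : a.1 < d.1 ∧ d.2 < a.2)
    (hdstrip : ∀ z ∈ X, ¬(a.1 < z.1 ∧ d.2 < z.2 ∧ z.2 < a.2))
    (hdseg : ∀ z ∈ X, ¬(a.1 < z.1 ∧ z.1 < d.1 ∧ z.2 = d.2))
    (hcX : c ∈ X) (hc : a.1 < c.1 ∧ c.2 < a.2)
    (hcstrip : ∀ z ∈ X, ¬(a.1 < z.1 ∧ z.1 < c.1 ∧ z.2 < a.2))
    (hcseg : ∀ z ∈ X, ¬(z.1 = c.1 ∧ c.2 < z.2 ∧ z.2 < a.2)) (hne : d ≠ c) :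
    c.1 < d.1 ∧ c.2 < d.2 := by
  have hfst : c.1 ≤ d.1 := by grind
  have hsnd : c.2 ≤ d.2 := by grind
  grind

/-- Under the Assumptions, if `d₁ ≠ d₂`, then there are points of `X` directly
below `a` and directly to the right of `a`; if `r` is the closest point of `X`
below `a` on the vertical line through `a` and `s` is the closest point of `X`
to the right of `a` on the horizontal line through `a`, then `(r,s)` is a blue
arrow, and there is a blue arrow `(r',s)` with `r' ≠ r` and `{r,r'}` a
decreasing pair. -/
theorem two_blue_arrows_of_two_ds (X : Finset (ℝ × ℝ)) (a d₁ d₂ t₁ w₁ t₂ w₂ : ℝ × ℝ)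
    (hnc : NonCollinear X) (haX : a ∈ X) (hiso : NotEndpoint X a)
    (hQ2 : ∀ z ∈ X, ¬(z.1 < a.1 ∧ a.2 < z.2))
    (hQ4 : ∃ z ∈ X, a.1 < z.1 ∧ z.2 < a.2)
    (hd1X : d₁ ∈ X) (hd1 : a.1 < d₁.1 ∧ d₁.2 < a.2)
    (hd1strip : ∀ z ∈ X, ¬(a.1 < z.1 ∧ d₁.2 < z.2 ∧ z.2 < a.2))
    (hd1seg : ∀ z ∈ X, ¬(a.1 < z.1 ∧ z.1 < d₁.1 ∧ z.2 = d₁.2))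
    (hd2X : d₂ ∈ X) (hd2 : a.1 < d₂.1 ∧ d₂.2 < a.2)
    (hd2strip : ∀ z ∈ X, ¬(a.1 < z.1 ∧ z.1 < d₂.1 ∧ z.2 < a.2))
    (hd2seg : ∀ z ∈ X, ¬(z.1 = d₂.1 ∧ d₂.2 < z.2 ∧ z.2 < a.2))
    (ht1 : RedArrow X t₁ w₁) (hl1 : lineThrough X t₁ w₁ = lineThrough X a d₁)
    (ht2 : RedArrow X t₂ w₂) (hl2 : lineThrough X t₂ w₂ = lineThrough X a d₂)
    (hne : d₁ ≠ d₂) :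
    (∃ z ∈ X, z.1 = a.1 ∧ z.2 < a.2) ∧
    (∃ z ∈ X, z.2 = a.2 ∧ a.1 < z.1) ∧
    ∀ r s : ℝ × ℝ,
      (r ∈ X ∧ r.1 = a.1 ∧ r.2 < a.2 ∧ ∀ z ∈ X, z.1 = a.1 → z.2 < a.2 → z.2 ≤ r.2) →
      (s ∈ X ∧ s.2 = a.2 ∧ a.1 < s.1 ∧ ∀ z ∈ X, z.2 = a.2 → a.1 < z.1 → s.1 ≤ z.1) →
      BlueArrow X r s ∧
        ∃ r' ∈ X, r' ≠ r ∧ DecPair r r' ∧ BlueArrow X r' s := by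
  obtain ⟨hfst, hsnd⟩ := lt_and_lt_of_strip_of_segment hd1X hd1 hd1strip hd1seg hd2X hd2 hd2strip
    hd2seg hne
  obtain ⟨hat₁, haw₁⟩ := hiso t₁ w₁ (.inr ht1)
  obtain ⟨hat₂, haw₂⟩ := hiso t₂ w₂ (.inr ht2)
  have side₁ : RedSide X a d₁ t₁ w₁ := ⟨hnc, haX, hQ2, hd1X, hd1.1, hd1.2, hd1strip, hd1seg,
    ⟨d₂, hd2X, hd2.1, hfst, hsnd⟩, ht1, hl1, hat₁, haw₁⟩
  have side₂ := redSide_antiReflect hnc haX hQ2 hd2X hd2.1 hd2.2 hd2strip hd2seg hd1X hd1.2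
    hfst hsnd ht2 hl2 hat₂ haw₂
  refine ⟨side₂.exists_below, side₁.exists_right, fun r s ⟨hrX, hra, hra', hr⟩
    ⟨hsX, hsa, hsa', hs⟩ => ?_⟩
  have hr : NearestBelow X a r := ⟨hrX, hra, hra', hr⟩
  have hs : NearestRight X a s := ⟨hsX, hsa, hsa', hs⟩
  have hsd₁ : s.1 < d₁.1 := side₁.nearestRight_fst_lt hiso hs hrX hra hra'
  have hrd₁ : r.2 < d₁.2 := side₁.snd_lt_of_below hrX hra hra'
  have hd₂s : d₂.1 < s.1 := side₂.lt_fst_of_right hsX hsa hsa'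
  have hd₂r : d₂.2 < r.2 := side₁.lt_snd_nearestBelow side₂ hiso hr
  exact ⟨blueArrow_of_nearest haX hiso hr hs hd1X hrd₁ hd1.2 hsd₁,
    exists_blueArrow_nearestRight haX hr hs hd1X hd1.2 hsd₁ hd1strip hd2X hd2.1 hd₂r hd₂s⟩
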